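/- arXiv:1407.6912 — 2 statements merged into one kernel-verified Lean document; each statement's English description precedes it below -/
import Mathlib

section
/- Let f : Matrix (Fin 3) (Fin 3) ℝ → ℂ be smooth with compact support. Then the map (a₁,a₂) ↦ ∫_{ℝ³} f( diag(a₁,a₂,(a₁a₂)⁻¹) · u(x,y,z) ) dx dy dz is a smooth function on (0,∞) × (0,∞). Consequently, the normalized orbital integral f^H(γ) := ∏_{1≤i<j≤3} |a_i−a_j| · ∫_{ℝ³} f(u(x,y,z)⁻¹ γ u(x,y,z)) dx dy dz, defined for regular γ = diag(a₁,a₂,a₃) with a₁,a₂ > 0, a₃ = (a₁a₂)⁻¹ and a₁,a₂,a₃ pairwise distinct, extends (after division by the factor |a₁|²|a₂|) to a smooth function of (a₁,a₂) on all of (0,∞)², including the non-regular points. -/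
open MeasureTheory

/-- The upper unitriangular matrix `u(x,y,z)` with rows `(1,x,z), (0,1,y), (0,0,1)`,
parametrizing the unipotent radical `U` of the upper-triangular Borel subgroup of
`SL(3,ℝ)` by `(x,y,z) ∈ ℝ³`. -/
noncomputable instance : NormedAddCommGroup (Matrix (Fin 3) (Fin 3) ℝ) :=
  Matrix.normedAddCommGroup

noncomputable instance : NormedSpace ℝ (Matrix (Fin 3) (Fin 3) ℝ) :=
  Matrix.normedSpace

noncomputable def uMat (p : ℝ × ℝ × ℝ) : Matrix (Fin 3) (Fin 3) ℝ :=
  !![1, p.1, p.2.2; 0, 1, p.2.1; 0, 0, 1]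

/-!
If `d₀` and `d₁` are nonzero, right multiplication by `U` moves `diag d` over all upper triangular
matrices with diagonal `d`, and so does conjugation by `U` if the `dᵢ` are distinct. In coordinates
both parametrizations of this affine space are a diagonal rescaling of `ℝ³`, followed for the
conjugation by a shear, which preserves volume. Their Jacobians relate each integral to that of `f`
over the affine space, hence to each other. The latter integral is smooth in `d` because, in the
coordinates above the diagonal, its integrand is supported in a compact set independent of `d`.
-/

section Integral

-- Instance search does not see `volume` on a product as a product measure.
instance isAddHaarMeasure_volume_prod {X Y : Type*} [AddGroup X] [TopologicalSpace X]
    [MeasureSpace X] [AddGroup Y] [TopologicalSpace Y] [MeasureSpace Y] [MeasurableAdd X]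
    [MeasurableAdd Y] [SFinite (volume : Measure X)] [SFinite (volume : Measure Y)]
    [(volume : Measure X).IsAddHaarMeasure] [(volume : Measure Y).IsAddHaarMeasure] :
    (volume : Measure (X × Y)).IsAddHaarMeasure :=
  Measure.prod.instIsAddHaarMeasure _ _

variable {E : Type*} [NormedAddCommGroup E] [NormedSpace ℝ E]

theorem contDiffOn_integral_of_uniform_compact_support
    {P V : Type*} [NormedAddCommGroup P] [NormedSpace ℝ P] [NormedAddCommGroup V] [NormedSpace ℝ V]
    [FiniteDimensional ℝ V] [MeasurableSpace V] [BorelSpace V] {μ : Measure V}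
    [μ.IsAddHaarMeasure] {n : ℕ∞} {g : P → V → E} {s : Set P} {k : Set V}
    (hs : IsOpen s) (hk : IsCompact k) (hgk : ∀ a v, a ∈ s → v ∉ k → g a v = 0)
    (hg : ContDiffOn ℝ n ↿g (s ×ˢ Set.univ)) :
    ContDiffOn ℝ n (fun a => ∫ v, g a v ∂μ) s := by
  -- The integral of `g a` is the value at `0` of its convolution with the constant function `1`.
  have hconv := contDiffOn_convolution_left_with_param_comp (μ := μ)
    (ContinuousLinearMap.lsmul ℝ ℝ : ℝ →L[ℝ] E →L[ℝ] E).flip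
    (contDiffOn_const (c := (0 : V))) hs hk hgk (locallyIntegrable_const (1 : ℝ)) hg
  simpa only [convolution_def, ContinuousLinearMap.flip_apply, ContinuousLinearMap.lsmul_apply,
    one_smul] using hconv

theorem abs_det_smul_integral_comp_linearMap
    {V : Type*} [NormedAddCommGroup V] [NormedSpace ℝ V] [FiniteDimensional ℝ V]
    [MeasurableSpace V] [BorelSpace V] (μ : Measure V) [μ.IsAddHaarMeasure]
    {T : V →ₗ[ℝ] V} (hT : LinearMap.det T ≠ 0) (F : V → E) :
    |LinearMap.det T| • ∫ v, F (T v) ∂μ = ∫ v, F v ∂μ := by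
  have hemb : MeasurableEmbedding T :=
    (T.equivOfDetNeZero hT).toContinuousLinearEquiv.toHomeomorph.measurableEmbedding
  rw [← hemb.integral_map, Measure.map_linearMap_addHaar_eq_smul_addHaar μ hT,
    integral_smul_measure, ENNReal.toReal_ofReal (abs_nonneg _), smul_smul, ← abs_mul,
    mul_inv_cancel₀ hT, abs_one, one_smul]

theorem abs_mul_smul_integral_comp_scale {α β γ : ℝ} (hα : α ≠ 0) (hβ : β ≠ 0) (hγ : γ ≠ 0)
    (F : ℝ × ℝ × ℝ → E) :
    (|α| * |β| * |γ|) • ∫ p : ℝ × ℝ × ℝ, F (α * p.1, β * p.2.1, γ * p.2.2) = ∫ p, F p := by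
  let T : ℝ × ℝ × ℝ →ₗ[ℝ] ℝ × ℝ × ℝ :=
    (LinearMap.mulLeft ℝ α).prodMap ((LinearMap.mulLeft ℝ β).prodMap (LinearMap.mulLeft ℝ γ))
  have hdet : LinearMap.det T = α * (β * γ) := by
    simp only [T, LinearMap.det_prodMap, LinearMap.det_mulLeft]
  have hT : LinearMap.det T ≠ 0 := hdet ▸ mul_ne_zero hα (mul_ne_zero hβ hγ)
  rw [← abs_det_smul_integral_comp_linearMap volume hT F, hdet, abs_mul, abs_mul, mul_assoc]
  rfl

theorem integral_comp_shear {X Y G : Type*} [MeasurableSpace X] [MeasurableSpace Y]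
    [MeasurableSpace G] [AddGroup G] [MeasurableAdd₂ G] [MeasurableNeg G]
    {μ : Measure X} {ν : Measure Y} {κ : Measure G} [SFinite μ] [SFinite ν] [SFinite κ]
    [κ.IsAddRightInvariant] {h : X → Y → G} (hh : Measurable (Function.uncurry h))
    (F : X × Y × G → E) :
    ∫ p, F (p.1, p.2.1, p.2.2 + h p.1 p.2.1) ∂μ.prod (ν.prod κ) = ∫ p, F p ∂μ.prod (ν.prod κ) := by
  have : Measurable fun p : X × Y × G => h p.1 p.2.1 :=
    hh.comp (measurable_fst.prodMk measurable_snd.fst)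
  let shear : X × Y × G ≃ᵐ X × Y × G :=
    { toFun p := (p.1, p.2.1, p.2.2 + h p.1 p.2.1)
      invFun p := (p.1, p.2.1, p.2.2 + -h p.1 p.2.1)
      left_inv p := by simp only [add_neg_cancel_right]
      right_inv p := by simp only [neg_add_cancel_right]
      measurable_toFun := by simp only [Equiv.coe_fn_mk]; fun_prop
      measurable_invFun := by simp only [Equiv.coe_fn_symm_mk]; fun_prop }
  have shear_fibre (x : X) :
      (ν.prod κ).map (fun q : Y × G => (q.1, q.2 + h x q.1)) = ν.prod κ :=
    ((MeasurePreserving.id ν).skew_product (g := fun y z => z + h x y) (by fun_prop)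
      (.of_forall fun y => map_add_right_eq_self κ (h x y))).map_eq
  have shear_preserving : MeasurePreserving shear (μ.prod (ν.prod κ)) (μ.prod (ν.prod κ)) :=
    (MeasurePreserving.id μ).skew_product (g := fun x (q : Y × G) => (q.1, q.2 + h x q.1))
      (by fun_prop) (.of_forall shear_fibre)
  exact shear_preserving.integral_comp' F

end Integral

/-- The upper triangular matrix with diagonal `d` and entries `x`, `y`, `z` above it, where
`p = (x, y, z)` is read in the coordinate order of `uMat`. -/
def upperTriangular (d : Fin 3 → ℝ) (p : ℝ × ℝ × ℝ) : Matrix (Fin 3) (Fin 3) ℝ :=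
  !![d 0, p.1, p.2.2; 0, d 1, p.2.1; 0, 0, d 2]

theorem diagonal_mul_uMat (d : Fin 3 → ℝ) (p : ℝ × ℝ × ℝ) :
    Matrix.diagonal d * uMat p = upperTriangular d (d 0 * p.1, d 1 * p.2.1, d 0 * p.2.2) := by
  ext i j
  fin_cases i <;> fin_cases j <;> simp [uMat, upperTriangular]

theorem uMat_inv (p : ℝ × ℝ × ℝ) : (uMat p)⁻¹ = uMat (-p.1, -p.2.1, p.1 * p.2.1 - p.2.2) := by
  refine Matrix.inv_eq_left_inv ?_
  ext i j
  fin_cases i <;> fin_cases j <;> simp [uMat, Matrix.mul_apply, Fin.sum_univ_three]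
  ring

theorem uMat_inv_mul_diagonal_mul_uMat (d : Fin 3 → ℝ) (p : ℝ × ℝ × ℝ) :
    (uMat p)⁻¹ * Matrix.diagonal d * uMat p =
      upperTriangular d ((d 0 - d 1) * p.1, (d 1 - d 2) * p.2.1,
        (d 0 - d 2) * p.2.2 - (d 1 - d 2) * p.1 * p.2.1) := by
  rw [uMat_inv, mul_assoc, diagonal_mul_uMat]
  ext i j
  fin_cases i <;> fin_cases j <;>
    simp [uMat, upperTriangular, Matrix.mul_apply, Fin.sum_univ_three] <;> ring

theorem contDiff_upperTriangular {n : WithTop ℕ∞} :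
    ContDiff ℝ n fun q : (Fin 3 → ℝ) × (ℝ × ℝ × ℝ) => upperTriangular q.1 q.2 := by
  have zero : ContDiff ℝ n fun _ : (Fin 3 → ℝ) × (ℝ × ℝ × ℝ) => (0 : ℝ) := contDiff_const
  have diag (i : Fin 3) : ContDiff ℝ n fun q : (Fin 3 → ℝ) × (ℝ × ℝ × ℝ) => q.1 i := by fun_prop
  refine contDiff_pi.2 fun i => contDiff_pi.2 fun j => ?_
  fin_cases i <;> fin_cases j
  exacts [diag 0, contDiff_snd.fst, contDiff_snd.snd.snd, zero, diag 1, contDiff_snd.snd.fst,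
    zero, zero, diag 2]

section OrbitalIntegral

variable {E : Type*} [NormedAddCommGroup E] [NormedSpace ℝ E]

theorem contDiff_integral_upperTriangular {n : ℕ∞} {f : Matrix (Fin 3) (Fin 3) ℝ → E}
    (hf : ContDiff ℝ n f) (hsupp : HasCompactSupport f) :
    ContDiff ℝ n fun d => ∫ p, f (upperTriangular d p) := by
  let entries : Matrix (Fin 3) (Fin 3) ℝ → ℝ × ℝ × ℝ := fun M => (M 0 1, M 1 2, M 0 2)
  have hentries : Continuous entries :=
    (continuous_id.matrix_elem 0 1).prodMk
      ((continuous_id.matrix_elem 1 2).prodMk (continuous_id.matrix_elem 0 2))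
  have hzero (d : Fin 3 → ℝ) (p : ℝ × ℝ × ℝ) (hp : p ∉ entries '' tsupport f) :
      f (upperTriangular d p) = 0 :=
    image_eq_zero_of_notMem_tsupport fun hmem => hp ⟨upperTriangular d p, hmem, rfl⟩
  exact contDiffOn_univ.1 <| contDiffOn_integral_of_uniform_compact_support isOpen_univ
    (hsupp.isCompact.image hentries) (fun d p _ => hzero d p)
    (hf.comp contDiff_upperTriangular).contDiffOn

theorem smul_integral_diagonal_mul_uMat (f : Matrix (Fin 3) (Fin 3) ℝ → E) {d : Fin 3 → ℝ}
    (h0 : d 0 ≠ 0) (h1 : d 1 ≠ 0) :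
    (|d 0| ^ 2 * |d 1|) • ∫ p, f (Matrix.diagonal d * uMat p) =
      ∫ p, f (upperTriangular d p) := by
  simp only [diagonal_mul_uMat]
  rw [← abs_mul_smul_integral_comp_scale h0 h1 h0 fun p => f (upperTriangular d p)]
  congr 1
  ring

theorem smul_integral_conj_diagonal (f : Matrix (Fin 3) (Fin 3) ℝ → E) {d : Fin 3 → ℝ}
    (h01 : d 0 ≠ d 1) (h02 : d 0 ≠ d 2) (h12 : d 1 ≠ d 2) :
    (|d 0 - d 1| * |d 1 - d 2| * |d 0 - d 2|) •
        ∫ p, f ((uMat p)⁻¹ * Matrix.diagonal d * uMat p) =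
      ∫ p, f (upperTriangular d p) := by
  have h01' : d 0 - d 1 ≠ 0 := sub_ne_zero.2 h01
  -- In the rescaled coordinates `((d₀ - d₁)x, (d₁ - d₂)y, (d₀ - d₂)z)` the quadratic term
  -- `(d₁ - d₂)xy` of the conjugate is the product of the first two divided by `d₀ - d₁`.
  let shear (x y : ℝ) : ℝ := -(x * y / (d 0 - d 1))
  have conj_eq (p : ℝ × ℝ × ℝ) : (uMat p)⁻¹ * Matrix.diagonal d * uMat p =
      upperTriangular d ((d 0 - d 1) * p.1, (d 1 - d 2) * p.2.1,
        (d 0 - d 2) * p.2.2 + shear ((d 0 - d 1) * p.1) ((d 1 - d 2) * p.2.1)) := by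
    rw [uMat_inv_mul_diagonal_mul_uMat]
    congr! 3
    simp only [shear]
    field_simp
    ring
  have hshear : Measurable (Function.uncurry shear) := by fun_prop
  calc
    _ = (|d 0 - d 1| * |d 1 - d 2| * |d 0 - d 2|) • ∫ p : ℝ × ℝ × ℝ,
          f (upperTriangular d ((d 0 - d 1) * p.1, (d 1 - d 2) * p.2.1,
            (d 0 - d 2) * p.2.2 + shear ((d 0 - d 1) * p.1) ((d 1 - d 2) * p.2.1))) := by
      simp only [conj_eq]
    _ = ∫ p : ℝ × ℝ × ℝ, f (upperTriangular d (p.1, p.2.1, p.2.2 + shear p.1 p.2.1)) :=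
      abs_mul_smul_integral_comp_scale h01' (sub_ne_zero.2 h12) (sub_ne_zero.2 h02)
        fun p => f (upperTriangular d (p.1, p.2.1, p.2.2 + shear p.1 p.2.1))
    _ = ∫ p, f (upperTriangular d p) :=
      integral_comp_shear hshear fun p => f (upperTriangular d p)

theorem contDiffOn_integral_diagonal_mul_uMat {n : ℕ∞} {f : Matrix (Fin 3) (Fin 3) ℝ → E}
    (hf : ContDiff ℝ n f) (hsupp : HasCompactSupport f) :
    ContDiffOn ℝ n (fun d : Fin 3 → ℝ => ∫ p, f (Matrix.diagonal d * uMat p))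
      {d | d 0 ≠ 0 ∧ d 1 ≠ 0} := by
  have hjac : ContDiffOn ℝ n (fun d : Fin 3 → ℝ => (|d 0| ^ 2 * |d 1|)⁻¹)
      {d | d 0 ≠ 0 ∧ d 1 ≠ 0} := by
    have h0 : ContDiffOn ℝ n (fun d : Fin 3 → ℝ => |d 0|) {d | d 0 ≠ 0 ∧ d 1 ≠ 0} :=
      ContDiffOn.abs (by fun_prop) fun d hd => hd.1
    have h1 : ContDiffOn ℝ n (fun d : Fin 3 → ℝ => |d 1|) {d | d 0 ≠ 0 ∧ d 1 ≠ 0} :=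
      ContDiffOn.abs (by fun_prop) fun d hd => hd.2
    exact ((h0.pow 2).mul h1).inv fun d ⟨hd0, hd1⟩ => by positivity
  refine (hjac.smul (contDiff_integral_upperTriangular hf hsupp).contDiffOn).congr ?_
  rintro d ⟨hd0, hd1⟩
  have hne : |d 0| ^ 2 * |d 1| ≠ 0 := by positivity
  exact (eq_inv_smul_iff₀ hne).2 (smul_integral_diagonal_mul_uMat f hd0 hd1)

theorem normalized_orbital_integral_smooth_general {n : ℕ∞} {f : Matrix (Fin 3) (Fin 3) ℝ → E}
    (hf : ContDiff ℝ n f) (hsupp : HasCompactSupport f) :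
    ContDiffOn ℝ n (fun d : Fin 3 → ℝ => ∫ p, f (Matrix.diagonal d * uMat p))
      {d | d 0 ≠ 0 ∧ d 1 ≠ 0} ∧
    ∀ d : Fin 3 → ℝ, d 0 ≠ 0 → d 1 ≠ 0 → d 0 ≠ d 1 → d 0 ≠ d 2 → d 1 ≠ d 2 →
      (|d 0 - d 1| * |d 1 - d 2| * |d 0 - d 2|) •
          ∫ p, f ((uMat p)⁻¹ * Matrix.diagonal d * uMat p) =
        (|d 0| ^ 2 * |d 1|) • ∫ p, f (Matrix.diagonal d * uMat p) :=
  ⟨contDiffOn_integral_diagonal_mul_uMat hf hsupp, fun _ h0 h1 h01 h02 h12 =>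
    (smul_integral_conj_diagonal f h01 h02 h12).trans
      (smul_integral_diagonal_mul_uMat f h0 h1).symm⟩

end OrbitalIntegral

theorem contDiffOn_detOneDiagonal {n : WithTop ℕ∞} :
    ContDiffOn ℝ n (fun a : ℝ × ℝ => ![a.1, a.2, (a.1 * a.2)⁻¹])
      {a | a.1 ≠ 0 ∧ a.2 ≠ 0} := by
  have hinv : ContDiffOn ℝ n (fun a : ℝ × ℝ => (a.1 * a.2)⁻¹) {a | a.1 ≠ 0 ∧ a.2 ≠ 0} :=
    ContDiffOn.inv (by fun_prop) fun a ha => mul_ne_zero ha.1 ha.2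
  refine contDiffOn_pi.2 fun i => ?_
  fin_cases i
  exacts [contDiffOn_fst, contDiffOn_snd, hinv]

/-- For smooth compactly supported `f`, the map
`(a₁,a₂) ↦ ∫_{ℝ³} f(diag(a₁,a₂,(a₁a₂)⁻¹)·u(x,y,z)) dx dy dz` is smooth on `(0,∞)²`;
at regular points it coincides (after the Jacobian factor) with the normalized orbital
integral `f^H(γ) = ∏_{i<j}|aᵢ-aⱼ| · ∫_{ℝ³} f(u⁻¹ γ u)`, divided by `|a₁|²|a₂|`.  Hence
the latter extends smoothly to all of `(0,∞)²`. -/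
theorem normalized_orbital_integral_smooth
    (f : Matrix (Fin 3) (Fin 3) ℝ → ℂ)
    (hf : ContDiff ℝ (⊤ : ℕ∞) f) (hsupp : HasCompactSupport f) :
    ContDiffOn ℝ (⊤ : ℕ∞)
      (fun a : ℝ × ℝ =>
        ∫ p : ℝ × ℝ × ℝ, f (Matrix.diagonal ![a.1, a.2, (a.1 * a.2)⁻¹] * uMat p))
      (Set.Ioi (0:ℝ) ×ˢ Set.Ioi (0:ℝ)) ∧
    ∀ a₁ a₂ : ℝ, 0 < a₁ → 0 < a₂ →
      a₁ ≠ a₂ → a₁ ≠ (a₁ * a₂)⁻¹ → a₂ ≠ (a₁ * a₂)⁻¹ →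
      (|a₁ - a₂| * |a₂ - (a₁ * a₂)⁻¹| * |a₁ - (a₁ * a₂)⁻¹|) •
          ∫ p : ℝ × ℝ × ℝ,
            f ((uMat p)⁻¹ * Matrix.diagonal ![a₁, a₂, (a₁ * a₂)⁻¹] * uMat p)
        = (|a₁| ^ 2 * |a₂|) •
            ∫ p : ℝ × ℝ × ℝ,
              f (Matrix.diagonal ![a₁, a₂, (a₁ * a₂)⁻¹] * uMat p) := by
  obtain ⟨smooth, identity⟩ := normalized_orbital_integral_smooth_general hf hsupp
  exact ⟨smooth.comp (contDiffOn_detOneDiagonal.mono fun a ha => ⟨ha.1.ne', ha.2.ne'⟩)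
      fun a ha => ⟨ha.1.ne', ha.2.ne'⟩,
    fun a₁ a₂ h₁ h₂ => identity ![a₁, a₂, (a₁ * a₂)⁻¹] h₁.ne' h₂.ne'⟩
end

section
/- Let f : SL(3,ℝ) → ℂ be smooth with compact support and K-bi-invariant, let F_f(λ) = ∫₀^∞ sign(t−1) f(m(t,λ)) dt for 0 < |λ| < 1, and define G_f(λ) := |λ| · ( F_f(λ) + F_f(−λ) ). Then for every natural number N there exist complex constants a₀,…,a_N and b₀,…,b_N such that G_f(λ) = ∑_{n=0}^N ( a_n |λ|⁻¹ + b_n ) λ^{2n} + o(λ^{2N}) as λ → 0. -/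
open MeasureTheory Asymptotics Filter Matrix

/-- `SL(3,ℝ)`: the group of 3×3 real matrices of determinant 1. -/
abbrev SL3 := Matrix.SpecialLinearGroup (Fin 3) ℝ

/-- The topology on `SL(3,ℝ)` induced from the space of 3×3 real matrices. -/
noncomputable instance : TopologicalSpace SL3 :=
  TopologicalSpace.induced ((↑) : SL3 → Matrix (Fin 3) (Fin 3) ℝ) inferInstance

/-- The element `m(t,λ) ∈ SL(3,ℝ)` with rows `(√(1-λ²), tλ, 0), (-t⁻¹λ, √(1-λ²), 0),
(0,0,1)`, defined for `t > 0` and `|λ| < 1` (junk value `1` otherwise). -/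
noncomputable def mSL (t lam : ℝ) : SL3 :=
  if h : 0 < t ∧ |lam| < 1 then
    ⟨!![Real.sqrt (1 - lam ^ 2), t * lam, 0;
        -(t⁻¹ * lam), Real.sqrt (1 - lam ^ 2), 0;
        0, 0, 1], by
      have hl := abs_lt.mp h.2
      have h1 : (0:ℝ) ≤ 1 - lam ^ 2 := by nlinarith [hl.1, hl.2]
      have ht : t ≠ 0 := ne_of_gt h.1
      simp [Matrix.det_fin_three, Real.mul_self_sqrt h1]
      field_simp
      ring⟩
  else 1

/-- The orbital integral `F_f(λ) = ∫₀^∞ sign(t-1) · f(m(t,λ)) dt`. -/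
noncomputable def orbF (f : SL3 → ℂ) (lam : ℝ) : ℂ :=
  ∫ t in Set.Ioi (0:ℝ), (Real.sign (t - 1) : ℂ) * f (mSL t lam)

/-- `K = SO(3)`, the subgroup of `SL(3,ℝ)` of orthogonal matrices. -/
def SO3 : Set SL3 := {k : SL3 | (↑k : Matrix (Fin 3) (Fin 3) ℝ)ᵀ * (↑k : Matrix (Fin 3) (Fin 3) ℝ) = 1}

open Set Topology
open scoped ContDiff Interval

/-! Bi-invariance under `SO(2)` reduces `f (m(t, λ))` to `ψ (λ (t - t⁻¹))`, where `ψ u` is the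
value of `f` at the unipotent matrix `1 + u E₁₂`. After the substitution `t = exp (arsinh v)`,
adding `F(λ)` and `F(-λ)` turns the weight `exp (arsinh v)` into `2 v`, and `|λ| (F(λ) + F(-λ))`
becomes `∫₀^∞ φ(u) u / √(u² + y²) du` with `y = 2|λ|` and `φ(u) = ψ(u) + ψ(-u)`. Split the even
function `φ` into a Taylor polynomial at `0` and a remainder. Against even powers of `u` the
integral is smooth in `y` up to `y = 0` (substitute `s = √(u² + y²)`), while odd powers would
produce logarithms; against the remainder the kernel may be expanded in powers of `y / u` under
the integral. The resulting expansion in powers of `y = 2|λ|` is the claim: its odd terms are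
those with a factor `|λ|⁻¹`. -/

lemma sum_range_two_mul_add_one {M : Type*} [AddCommMonoid M] (g : ℕ → M) (N : ℕ) :
    ∑ k ∈ Finset.range (2 * N + 1), g k =
      ∑ n ∈ Finset.range (N + 1), g (2 * n) + ∑ n ∈ Finset.range N, g (2 * n + 1) := by
  induction N with
  | zero => simp
  | succ N ih =>
    rw [mul_add_one, Finset.sum_range_succ, Finset.sum_range_succ, ih,
      Finset.sum_range_succ _ (N + 1), Finset.sum_range_succ (fun n => g (2 * n + 1)) N,
      mul_add_one]
    abel

section Taylor

variable {E : Type*} [NormedAddCommGroup E] [NormedSpace ℝ E] {φ : ℝ → E}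

lemma iteratedDeriv_zero_of_even_of_odd (hφ : φ.Even) {k : ℕ} (hk : Odd k) :
    iteratedDeriv k φ 0 = 0 := by
  have h := iteratedDeriv_comp_neg k φ 0
  simp only [hφ _, neg_zero, hk.neg_one_pow, neg_smul, one_smul] at h
  have : IsAddTorsionFree E := .of_isTorsionFree ℝ E
  exact self_eq_neg.mp h

lemma taylorWithinEval_univ_zero (φ : ℝ → E) (n : ℕ) (x : ℝ) :
    taylorWithinEval φ n univ 0 x =
      ∑ k ∈ Finset.range (n + 1), x ^ k • (k.factorial : ℝ)⁻¹ • iteratedDeriv k φ 0 := by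
  simp only [taylor_within_apply, sub_zero, iteratedDerivWithin_univ, mul_comm, mul_smul]

lemma taylorWithinEval_univ_zero_of_even (hφ : φ.Even) (N : ℕ) (x : ℝ) :
    taylorWithinEval φ (2 * N) univ 0 x =
      ∑ j ∈ Finset.range (N + 1),
        x ^ (2 * j) • ((2 * j).factorial : ℝ)⁻¹ • iteratedDeriv (2 * j) φ 0 := by
  have hodd : ∀ n : ℕ, iteratedDeriv (2 * n + 1) φ 0 = 0 := fun n =>
    iteratedDeriv_zero_of_even_of_odd hφ (odd_two_mul_add_one n)
  simp [taylorWithinEval_univ_zero, sum_range_two_mul_add_one, hodd]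

lemma continuous_taylorWithinEval_univ_zero (φ : ℝ → E) (n : ℕ) :
    Continuous (taylorWithinEval φ n univ 0) := by
  have h := funext (taylorWithinEval_univ_zero φ n)
  rw [h]
  fun_prop

lemma exists_norm_sub_taylor_le_on_Icc {n : ℕ} (hφ : ContDiff ℝ (n + 1) φ) {A : ℝ} (hA : 0 < A) :
    ∃ C, ∀ x ∈ Icc 0 A, ‖φ x - taylorWithinEval φ n univ 0 x‖ ≤ C * x ^ (n + 1) := by
  obtain ⟨C, hC⟩ := exists_taylor_mean_remainder_bound hA.le hφ.contDiffOn
  refine ⟨C, fun x hx => ?_⟩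
  have hTaylor : taylorWithinEval φ n univ 0 x = taylorWithinEval φ n (Icc 0 A) 0 x := by
    simp only [taylor_within_apply, iteratedDerivWithin_univ]
    refine Finset.sum_congr rfl fun k hk => ?_
    have hkn : (k : WithTop ℕ∞) ≤ n + 1 := by
      exact_mod_cast (Finset.mem_range.1 hk).le
    rw [iteratedDerivWithin_eq_iteratedDeriv (uniqueDiffOn_Icc hA)
      (hφ.of_le hkn).contDiffAt (left_mem_Icc.2 hA.le)]
  simpa only [hTaylor, sub_zero] using hC x hx

-- On `[0, 1]` this is Taylor's theorem; on `[1, ∞)` every term is `O(x ^ (n + 1))`.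
lemma exists_norm_sub_taylor_le_of_bounded {n : ℕ} (hφ : ContDiff ℝ (n + 1) φ) {B : ℝ}
    (hB : ∀ x, 0 ≤ x → ‖φ x‖ ≤ B) :
    ∃ D, ∀ x, 0 ≤ x → ‖φ x - taylorWithinEval φ n univ 0 x‖ ≤ D * x ^ (n + 1) := by
  obtain ⟨C, hC⟩ := exists_norm_sub_taylor_le_on_Icc hφ one_pos
  have hB₀ : 0 ≤ B := (norm_nonneg _).trans (hB 0 le_rfl)
  set c : ℕ → E := fun k => (k.factorial : ℝ)⁻¹ • iteratedDeriv k φ 0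
  refine ⟨max C (B + ∑ k ∈ Finset.range (n + 1), ‖c k‖), fun x hx => ?_⟩
  rcases le_total x 1 with hx₁ | hx₁
  · exact (hC x ⟨hx, hx₁⟩).trans (by gcongr; exact le_max_left _ _)
  have hφx : ‖φ x‖ ≤ B * x ^ (n + 1) :=
    (hB x hx).trans (le_mul_of_one_le_right hB₀ (one_le_pow₀ hx₁))
  have hTaylor : ‖taylorWithinEval φ n univ 0 x‖ ≤
      (∑ k ∈ Finset.range (n + 1), ‖c k‖) * x ^ (n + 1) := by
    rw [taylorWithinEval_univ_zero, Finset.sum_mul]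
    refine norm_sum_le_of_le _ fun k hk => ?_
    rw [norm_smul, norm_pow, Real.norm_of_nonneg hx, mul_comm]
    gcongr
    exact (Finset.mem_range.1 hk).le
  calc ‖φ x - taylorWithinEval φ n univ 0 x‖
      ≤ (B + ∑ k ∈ Finset.range (n + 1), ‖c k‖) * x ^ (n + 1) := by
        rw [add_mul]; exact norm_sub_le_of_le hφx hTaylor
    _ ≤ _ := by gcongr; exact le_max_right _ _

end Taylor

section AbelTransform

variable {E : Type*} [NormedAddCommGroup E] [NormedSpace ℝ E]

lemma integral_sq_sub_sq_pow (a b y : ℝ) (k : ℕ) :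
    ∫ s in a..b, (s ^ 2 - y ^ 2) ^ k = ∑ j ∈ Finset.range (k + 1),
      (b ^ (2 * j + 1) - a ^ (2 * j + 1)) / (2 * j + 1) * (-y ^ 2) ^ (k - j) * k.choose j := by
  simp only [sub_eq_add_neg _ (y ^ 2), add_pow, ← pow_mul]
  rw [intervalIntegral.integral_finsetSum fun j _ => by
    apply Continuous.intervalIntegrable; fun_prop]
  simp

lemma hasDerivAt_sqrt_sq_add_sq {y : ℝ} (hy : y ≠ 0) (u : ℝ) :
    HasDerivAt (fun u => √(u ^ 2 + y ^ 2)) (u / √(u ^ 2 + y ^ 2)) u := by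
  have h : u ^ 2 + y ^ 2 ≠ 0 := by positivity
  refine (((hasDerivAt_pow 2 u).add_const (y ^ 2)).sqrt h).congr_deriv ?_
  simp [mul_div_mul_left]

lemma continuous_div_sqrt_sq_add_sq {y : ℝ} (hy : y ≠ 0) :
    Continuous fun u : ℝ => u / √(u ^ 2 + y ^ 2) :=
  continuous_id.div (by fun_prop) fun u => by positivity

lemma integral_abelKernel_mul_pow {y : ℝ} (hy : 0 < y) (A : ℝ) (k : ℕ) :
    ∫ u in 0..A, u / √(u ^ 2 + y ^ 2) * u ^ (2 * k) =
      ∫ s in y..√(A ^ 2 + y ^ 2), (s ^ 2 - y ^ 2) ^ k := by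
  have h := intervalIntegral.integral_comp_mul_deriv (a := 0) (b := A)
    (g := fun s => (s ^ 2 - y ^ 2) ^ k) (fun u _ => hasDerivAt_sqrt_sq_add_sq hy.ne' u)
    (continuous_div_sqrt_sq_add_sq hy.ne').continuousOn (by fun_prop)
  have hsq : ∀ u, √(u ^ 2 + y ^ 2) ^ 2 = u ^ 2 + y ^ 2 := fun u => Real.sq_sqrt (by positivity)
  simpa [hsq, Real.sqrt_sq hy.le, ← pow_mul, mul_comm (_ ^ _)] using h

lemma exists_contDiff_eq_integral_abelKernel_mul_pow {A : ℝ} (hA : A ≠ 0) (k : ℕ) :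
    ∃ S : ℝ → ℝ, ContDiff ℝ ∞ S ∧
      ∀ y, 0 < y → ∫ u in 0..A, u / √(u ^ 2 + y ^ 2) * u ^ (2 * k) = S y := by
  have hsqrt : ContDiff ℝ ∞ fun y => √(A ^ 2 + y ^ 2) :=
    ContDiff.sqrt (by fun_prop) fun y => by positivity
  refine ⟨fun y => ∫ s in y..√(A ^ 2 + y ^ 2), (s ^ 2 - y ^ 2) ^ k, ?_,
    fun y hy => integral_abelKernel_mul_pow hy A k⟩
  simp only [integral_sq_sub_sq_pow]
  fun_prop

lemma intervalIntegrable_inv_pow_smul {R : ℝ → E} {n k : ℕ} {A C : ℝ} (hR : Continuous R)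
    (hA : 0 ≤ A) (hRC : ∀ u ∈ Icc 0 A, ‖R u‖ ≤ C * u ^ n) (hk : k ≤ n) :
    IntervalIntegrable (fun u => (u ^ k)⁻¹ • R u) volume 0 A := by
  have hmeas : AEStronglyMeasurable (fun u : ℝ => (u ^ k)⁻¹ • R u) (volume.restrict (Ι 0 A)) :=
    (by fun_prop : Measurable fun u : ℝ => (u ^ k)⁻¹).aestronglyMeasurable.smul
      hR.aestronglyMeasurable
  have hmajorant : IntervalIntegrable (fun u => C * u ^ (n - k)) volume 0 A := by
    apply Continuous.intervalIntegrable
    fun_prop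
  refine hmajorant.mono_fun' hmeas ?_
  filter_upwards [ae_restrict_mem measurableSet_uIoc] with u hu
  rw [uIoc_of_le hA] at hu
  have hu₀ : 0 < u := hu.1
  rw [norm_smul, norm_inv, norm_pow, Real.norm_of_nonneg hu₀.le, inv_mul_le_iff₀ (by positivity),
    mul_left_comm, ← pow_add, Nat.add_sub_cancel' hk]
  exact hRC u ⟨hu₀.le, hu.2⟩

-- Where `R` vanishes to order `n` at `0`, a kernel expanded in powers of `y / u` may be integrated
-- against it term by term: the moments below order `n` converge.
lemma norm_integral_smul_sub_sum_moments_le {K : ℝ → ℝ} {R : ℝ → E} {c : ℕ → ℝ} {n : ℕ}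
    {A C D y : ℝ} (hK : Continuous K) (hR : Continuous R) (hA : 0 ≤ A)
    (hKD : ∀ u ∈ Ioc 0 A, ‖K u - ∑ k ∈ Finset.range n, (y / u) ^ k * c k‖ ≤ D * (y / u) ^ n)
    (hRC : ∀ u ∈ Icc 0 A, ‖R u‖ ≤ C * u ^ n) :
    ‖(∫ u in 0..A, K u • R u) -
        ∑ k ∈ Finset.range n, y ^ k • c k • ∫ u in 0..A, (u ^ k)⁻¹ • R u‖ ≤
      C * D * A * y ^ n := by
  have hterm : ∀ k ∈ Finset.range n,
      IntervalIntegrable (fun u => y ^ k • c k • (u ^ k)⁻¹ • R u) volume 0 A := fun k hk =>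
    ((intervalIntegrable_inv_pow_smul hR hA hRC (Finset.mem_range.1 hk).le).smul _).smul _
  have hdiff : (∫ u in 0..A, K u • R u) -
        ∑ k ∈ Finset.range n, y ^ k • c k • ∫ u in 0..A, (u ^ k)⁻¹ • R u =
      ∫ u in 0..A, (K u • R u - ∑ k ∈ Finset.range n, y ^ k • c k • (u ^ k)⁻¹ • R u) := by
    have hKR : IntervalIntegrable (fun u => K u • R u) volume 0 A :=
      (hK.smul hR).intervalIntegrable _ _
    rw [intervalIntegral.integral_sub hKR
      (by simpa only [Finset.sum_fn] using IntervalIntegrable.sum _ hterm),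
      intervalIntegral.integral_finsetSum hterm]
    simp only [intervalIntegral.integral_smul]
  have hbound : ∀ u ∈ Ι 0 A,
      ‖K u • R u - ∑ k ∈ Finset.range n, y ^ k • c k • (u ^ k)⁻¹ • R u‖ ≤ C * D * y ^ n := by
    intro u hu
    rw [uIoc_of_le hA] at hu
    have hu₀ : u ≠ 0 := hu.1.ne'
    have hfactor : K u • R u - ∑ k ∈ Finset.range n, y ^ k • c k • (u ^ k)⁻¹ • R u =
        (K u - ∑ k ∈ Finset.range n, (y / u) ^ k * c k) • R u := by
      rw [sub_smul, Finset.sum_smul]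
      refine congrArg _ (Finset.sum_congr rfl fun k _ => ?_)
      rw [smul_smul, smul_smul, div_pow, div_eq_mul_inv, mul_right_comm, mul_assoc]
    calc _ = ‖K u - ∑ k ∈ Finset.range n, (y / u) ^ k * c k‖ * ‖R u‖ := by
          rw [hfactor, norm_smul]
      _ ≤ (D * (y / u) ^ n) * (C * u ^ n) :=
          mul_le_mul (hKD u hu) (hRC u ⟨hu.1.le, hu.2⟩) (norm_nonneg _)
            ((norm_nonneg _).trans (hKD u hu))
      _ = C * D * y ^ n := by rw [div_pow]; field_simp
  calc _ ≤ C * D * y ^ n * |A - 0| := by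
        rw [hdiff]; exact intervalIntegral.norm_integral_le_of_norm_le_const hbound
    _ = C * D * A * y ^ n := by rw [sub_zero, abs_of_nonneg hA]; ring

lemma div_sqrt_sq_add_sq_eq_inv_sqrt {u : ℝ} (hu : 0 < u) (y : ℝ) :
    u / √(u ^ 2 + y ^ 2) = (√(1 + (y / u) ^ 2))⁻¹ := by
  have hfactor : u ^ 2 + y ^ 2 = u ^ 2 * (1 + (y / u) ^ 2) := by field_simp
  rw [hfactor, Real.sqrt_mul (sq_nonneg u), Real.sqrt_sq hu.le, div_mul_cancel_left₀ hu.ne']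

lemma contDiff_inv_sqrt_one_add_sq : ContDiff ℝ ∞ fun z : ℝ => (√(1 + z ^ 2))⁻¹ :=
  (ContDiff.sqrt (by fun_prop) fun z => by positivity).inv fun z => by positivity

lemma exists_norm_abelKernel_sub_sum_pow_le (n : ℕ) :
    ∃ (c : ℕ → ℝ) (D : ℝ), ∀ u y : ℝ, 0 < u → 0 ≤ y →
      ‖u / √(u ^ 2 + y ^ 2) - ∑ k ∈ Finset.range (n + 1), (y / u) ^ k * c k‖ ≤
        D * (y / u) ^ (n + 1) := by
  have hle : ∀ z : ℝ, 0 ≤ z → ‖(√(1 + z ^ 2))⁻¹‖ ≤ 1 := fun z _ => by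
    rw [norm_inv, Real.norm_of_nonneg (Real.sqrt_nonneg _)]
    exact inv_le_one_of_one_le₀ (Real.one_le_sqrt.2 (by nlinarith))
  obtain ⟨D, hD⟩ := exists_norm_sub_taylor_le_of_bounded (n := n)
    (mod_cast contDiff_infty.1 contDiff_inv_sqrt_one_add_sq (n + 1)) hle
  refine ⟨fun k => (k.factorial : ℝ)⁻¹ * iteratedDeriv k (fun z : ℝ => (√(1 + z ^ 2))⁻¹) 0, D,
    fun u y hu hy => ?_⟩
  simpa only [taylorWithinEval_univ_zero, smul_eq_mul, ← div_sqrt_sq_add_sq_eq_inv_sqrt hu]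
    using hD (y / u) (by positivity)

lemma exists_contDiff_eq_integral_abelKernel_smul_taylor [CompleteSpace E] {φ : ℝ → E}
    (heven : φ.Even) {A : ℝ} (hA : A ≠ 0) (N : ℕ) :
    ∃ S : ℝ → E, ContDiff ℝ ∞ S ∧ ∀ y, 0 < y →
      ∫ u in 0..A, (u / √(u ^ 2 + y ^ 2)) • taylorWithinEval φ (2 * N) univ 0 u = S y := by
  choose S hS hSeq using exists_contDiff_eq_integral_abelKernel_mul_pow hA
  refine ⟨fun y => ∑ j ∈ Finset.range (N + 1),
    S j y • ((2 * j).factorial : ℝ)⁻¹ • iteratedDeriv (2 * j) φ 0, by fun_prop, fun y hy => ?_⟩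
  have hK := continuous_div_sqrt_sq_add_sq hy.ne'
  simp only [taylorWithinEval_univ_zero_of_even heven, Finset.smul_sum, ← hSeq _ y hy]
  rw [intervalIntegral.integral_finsetSum fun j _ => by
    apply Continuous.intervalIntegrable; fun_prop]
  refine Finset.sum_congr rfl fun j _ => ?_
  rw [← intervalIntegral.integral_smul_const]
  simp only [mul_smul]

lemma exists_contDiff_isBigO_integral_abelKernel_smul [CompleteSpace E] {φ : ℝ → E}
    (heven : φ.Even) (hφ : ContDiff ℝ ∞ φ) {A : ℝ} (hA : 0 < A) (N : ℕ) :
    ∃ S : ℝ → E, ContDiff ℝ ∞ S ∧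
      (fun y => (∫ u in 0..A, (u / √(u ^ 2 + y ^ 2)) • φ u) - S y) =O[𝓝[>] 0]
        fun y => y ^ (2 * N + 1) := by
  set T : ℝ → E := taylorWithinEval φ (2 * N) univ 0 with hT_def
  have hT : Continuous T := continuous_taylorWithinEval_univ_zero φ (2 * N)
  have hR : Continuous fun u => φ u - T u := hφ.continuous.sub hT
  obtain ⟨C, hC⟩ : ∃ C, ∀ u ∈ Icc 0 A, ‖φ u - T u‖ ≤ C * u ^ (2 * N + 1) :=
    exists_norm_sub_taylor_le_on_Icc (mod_cast contDiff_infty.1 hφ (2 * N + 1)) hA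
  obtain ⟨S, hS, hSeq⟩ := exists_contDiff_eq_integral_abelKernel_smul_taylor heven hA.ne' N
  obtain ⟨c, D, hD⟩ := exists_norm_abelKernel_sub_sum_pow_le (2 * N)
  refine ⟨fun y => S y + ∑ k ∈ Finset.range (2 * N + 1),
    y ^ k • c k • ∫ u in 0..A, (u ^ k)⁻¹ • (φ u - T u), by fun_prop, ?_⟩
  refine IsBigO.of_bound (C * D * A) ?_
  filter_upwards [self_mem_nhdsWithin] with y hy
  have hy : 0 < y := hy
  have hK := continuous_div_sqrt_sq_add_sq hy.ne'
  have hsplit : ∫ u in 0..A, (u / √(u ^ 2 + y ^ 2)) • φ u =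
      S y + ∫ u in 0..A, (u / √(u ^ 2 + y ^ 2)) • (φ u - T u) := by
    have hadd := intervalIntegral.integral_add ((hK.smul hT).intervalIntegrable (μ := volume) 0 A)
      ((hK.smul hR).intervalIntegrable 0 A)
    simpa only [Pi.smul_apply', ← smul_add, add_sub_cancel, hT_def, hSeq y hy] using hadd
  rw [hsplit, add_sub_add_left_eq_sub, norm_pow, Real.norm_of_nonneg hy.le]
  exact norm_integral_smul_sub_sum_moments_le hK hR hA.le (fun u hu => hD u y hu.1 hy.le) hC

/-- The Abel transform `y ↦ ∫₀^∞ φ(u) u / √(u² + y²) du` of a function on the half-line. -/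
noncomputable def abelTransform (φ : ℝ → E) (y : ℝ) : E :=
  ∫ u in Ioi 0, (u / √(u ^ 2 + y ^ 2)) • φ u

lemma exists_abelTransform_eq_intervalIntegral {φ : ℝ → E} (hφ : HasCompactSupport φ) :
    ∃ A, 0 < A ∧ ∀ y, abelTransform φ y = ∫ u in 0..A, (u / √(u ^ 2 + y ^ 2)) • φ u := by
  obtain ⟨A, hA, hsupp⟩ := hφ.isCompact.isBounded.subset_closedBall_lt 0 0
  refine ⟨A, hA, fun y => ?_⟩
  rw [intervalIntegral.integral_of_le hA.le, abelTransform]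
  refine setIntegral_eq_of_subset_of_forall_sdiff_eq_zero measurableSet_Ioi
    Ioc_subset_Ioi_self fun u hu => ?_
  have hAu : A < u := not_le.1 fun h => hu.2 ⟨hu.1, h⟩
  have hφu : φ u = 0 := image_eq_zero_of_notMem_tsupport fun h =>
    hAu.not_ge ((le_abs_self u).trans (mem_closedBall_zero_iff.1 (hsupp h)))
  rw [hφu, smul_zero]

theorem exists_abelTransform_sub_sum_isLittleO [CompleteSpace E] {φ : ℝ → E} (heven : φ.Even)
    (hφ : ContDiff ℝ ∞ φ) (hsupp : HasCompactSupport φ) (N : ℕ) :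
    ∃ c : ℕ → E, (fun y => abelTransform φ y - ∑ k ∈ Finset.range (2 * N + 1), y ^ k • c k)
      =o[𝓝[>] 0] fun y => y ^ (2 * N) := by
  obtain ⟨A, hA, habel⟩ := exists_abelTransform_eq_intervalIntegral hsupp
  obtain ⟨S, hS, hbigO⟩ := exists_contDiff_isBigO_integral_abelKernel_smul heven hφ hA N
  refine ⟨fun k => (k.factorial : ℝ)⁻¹ • iteratedDeriv k S 0, ?_⟩
  have hpow : (fun y : ℝ => y ^ (2 * N + 1)) =o[𝓝[>] 0] fun y => y ^ (2 * N) :=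
    (isLittleO_pow_pow (Nat.lt_succ_self _)).mono nhdsWithin_le_nhds
  have hTaylor : (fun y => S y - taylorWithinEval S (2 * N) univ 0 y) =o[𝓝[>] 0]
      fun y => y ^ (2 * N) := by
    simpa using (taylor_isLittleO_univ (x₀ := 0) (n := 2 * N)
      (contDiff_infty.1 hS _)).mono nhdsWithin_le_nhds
  simpa only [habel, taylorWithinEval_univ_zero, sub_add_sub_cancel]
    using (hbigO.trans_isLittleO hpow).add hTaylor

end AbelTransform

section UnipotentIntegral

variable {E : Type*} [NormedAddCommGroup E] [NormedSpace ℝ E]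

lemma exp_arsinh_sub_exp_neg_arsinh (v : ℝ) :
    Real.exp (Real.arsinh v) - Real.exp (-Real.arsinh v) = 2 * v := by
  have h := Real.sinh_arsinh v
  rw [Real.sinh_eq] at h
  linarith

lemma image_exp_arsinh_univ : (fun v => Real.exp (Real.arsinh v)) '' univ = Ioi 0 := by
  rw [image_univ, ← Function.comp_def, Real.arsinh_surjective.range_comp, Real.range_exp]

lemma integral_Ioi_zero_eq_integral_exp_arsinh (g : ℝ → E) :
    ∫ t in Ioi 0, g t =
      ∫ v, (Real.exp (Real.arsinh v) / √(1 + v ^ 2)) • g (Real.exp (Real.arsinh v)) := by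
  have hderiv : ∀ v ∈ univ, HasDerivWithinAt (fun v => Real.exp (Real.arsinh v))
      (Real.exp (Real.arsinh v) * (√(1 + v ^ 2))⁻¹) univ v := fun v _ =>
    (Real.hasDerivAt_arsinh v).exp.hasDerivWithinAt
  have hinj : InjOn (fun v => Real.exp (Real.arsinh v)) univ :=
    (Real.exp_injective.comp Real.arsinh_injective).injOn
  rw [← image_exp_arsinh_univ,
    integral_image_eq_integral_abs_deriv_smul MeasurableSet.univ hderiv hinj, setIntegral_univ]
  refine integral_congr_ae (.of_forall fun v => ?_)
  simp only [div_eq_mul_inv]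
  rw [abs_of_nonneg (by positivity)]

lemma sign_exp_sub_one (x : ℝ) : Real.sign (Real.exp x - 1) = Real.sign x := by
  rcases lt_trichotomy x 0 with hx | rfl | hx
  · rw [Real.sign_of_neg hx, Real.sign_of_neg (sub_neg.2 (Real.exp_lt_one_iff.2 hx))]
  · simp
  · rw [Real.sign_of_pos hx, Real.sign_of_pos (sub_pos.2 (Real.one_lt_exp_iff.2 hx))]

lemma sign_arsinh (v : ℝ) : Real.sign (Real.arsinh v) = Real.sign v := by
  simp only [Real.sign, Real.arsinh_neg_iff, Real.arsinh_pos_iff]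

lemma mul_sign_self (v : ℝ) : v * Real.sign v = |v| := by
  rcases lt_trichotomy v 0 with hv | rfl | hv
  · rw [Real.sign_of_neg hv, abs_of_neg hv, mul_neg_one]
  · simp
  · rw [Real.sign_of_pos hv, abs_of_pos hv, mul_one]

lemma measurable_sign : Measurable Real.sign :=
  Measurable.ite measurableSet_Iio measurable_const
    (Measurable.ite measurableSet_Ioi measurable_const measurable_const)

/-- The integral `∫₀^∞ sign(t - 1) ψ(λ (t - t⁻¹)) dt`, to which `orbF` reduces when `ψ` is the
restriction of the test function to the unipotent matrices `1 + u E₁₂`. -/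
noncomputable def unipotentOrbF (ψ : ℝ → E) (lam : ℝ) : E :=
  ∫ t in Ioi 0, Real.sign (t - 1) • ψ (lam * (t - t⁻¹))

lemma unipotentOrbF_eq_integral (ψ : ℝ → E) (lam : ℝ) :
    unipotentOrbF ψ lam =
      ∫ v, (Real.exp (Real.arsinh v) / √(1 + v ^ 2)) • Real.sign v • ψ (2 * lam * v) := by
  simp only [unipotentOrbF, integral_Ioi_zero_eq_integral_exp_arsinh, ← Real.exp_neg,
    exp_arsinh_sub_exp_neg_arsinh, sign_exp_sub_one, sign_arsinh, mul_left_comm lam, mul_assoc]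

lemma unipotentOrbF_neg_eq_neg_integral (ψ : ℝ → E) (lam : ℝ) :
    unipotentOrbF ψ (-lam) =
      -∫ v, (Real.exp (-Real.arsinh v) / √(1 + v ^ 2)) • Real.sign v • ψ (2 * lam * v) := by
  rw [unipotentOrbF_eq_integral, ← integral_neg_eq_self, ← integral_neg]
  simp only [Real.arsinh_neg, Real.sign_neg, neg_sq, neg_smul, smul_neg, mul_neg, neg_mul, neg_neg]

lemma integrable_smul_sign_smul_comp_mul {ψ : ℝ → E} (hψ : Continuous ψ)
    (hsupp : HasCompactSupport ψ) {w : ℝ → ℝ} (hw : Continuous w) {a : ℝ} (ha : a ≠ 0) :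
    Integrable fun v => w v • Real.sign v • ψ (a * v) := by
  have hbound : ∀ v, ‖Real.sign v‖ ≤ 1 := fun v => by
    rcases Real.sign_apply_eq v with h | h | h <;> simp [h]
  have hψa : HasCompactSupport fun v => ψ (a * v) :=
    hsupp.comp_homeomorph (Homeomorph.mulLeft₀ a ha)
  have hint : Integrable fun v => w v • ψ (a * v) :=
    (by fun_prop : Continuous fun v => w v • ψ (a * v)).integrable_of_hasCompactSupport
      hψa.smul_left
  simp only [smul_comm (w _)]
  exact hint.bdd_smul 1 measurable_sign.aestronglyMeasurable (.of_forall hbound)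

lemma unipotentOrbF_add_neg {ψ : ℝ → E} (hψ : Continuous ψ) (hsupp : HasCompactSupport ψ)
    {lam : ℝ} (hlam : lam ≠ 0) :
    unipotentOrbF ψ lam + unipotentOrbF ψ (-lam) =
      ∫ v, (2 * |v| / √(1 + v ^ 2)) • ψ (2 * lam * v) := by
  have ha : 2 * lam ≠ 0 := mul_ne_zero two_ne_zero hlam
  have hweight : ∀ s : ℝ → ℝ, Continuous s → Continuous fun v => s v / √(1 + v ^ 2) :=
    fun s hs => hs.div (by fun_prop) fun v => by positivity
  have hexp : Continuous fun v => Real.exp (Real.arsinh v) := Real.continuous_arsinh.rexp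
  have hexp_neg : Continuous fun v => Real.exp (-Real.arsinh v) := Real.continuous_arsinh.neg.rexp
  rw [unipotentOrbF_eq_integral, unipotentOrbF_neg_eq_neg_integral, ← sub_eq_add_neg,
    ← integral_sub (integrable_smul_sign_smul_comp_mul hψ hsupp (hweight _ hexp) ha)
      (integrable_smul_sign_smul_comp_mul hψ hsupp (hweight _ hexp_neg) ha)]
  refine integral_congr_ae (.of_forall fun v => ?_)
  simp only [← sub_smul, ← sub_div, exp_arsinh_sub_exp_neg_arsinh]
  rw [smul_smul, div_mul_eq_mul_div, mul_assoc, mul_sign_self]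

lemma integral_eq_integral_Ioi_add_neg {g : ℝ → E} (hg : Integrable g) :
    ∫ u, g u = ∫ u in Ioi 0, (g u + g (-u)) := by
  rw [integral_add hg.integrableOn hg.comp_neg.integrableOn, integral_comp_neg_Ioi, neg_zero,
    add_comm, intervalIntegral.integral_Iic_add_Ioi hg.integrableOn hg.integrableOn]

theorem abs_smul_unipotentOrbF_add_neg {ψ : ℝ → E} (hψ : Continuous ψ)
    (hsupp : HasCompactSupport ψ) {lam : ℝ} (hlam : lam ≠ 0) :
    |lam| • (unipotentOrbF ψ lam + unipotentOrbF ψ (-lam)) =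
      abelTransform (fun u => ψ u + ψ (-u)) (2 * |lam|) := by
  set g : ℝ → E := fun u => (|u| / √(u ^ 2 + (2 * lam) ^ 2)) • ψ u with hg_def
  have hg : Integrable g := by
    have hcont : Continuous fun u : ℝ => |u| / √(u ^ 2 + (2 * lam) ^ 2) :=
      continuous_abs.div (by fun_prop) fun u => by positivity
    exact (hcont.smul hψ).integrable_of_hasCompactSupport hsupp.smul_left
  have hscale : ∀ v, (2 * |v| / √(1 + v ^ 2)) • ψ (2 * lam * v) = (2 : ℝ) • g (2 * lam * v) := by
    intro v
    have hsqrt : √((2 * lam * v) ^ 2 + (2 * lam) ^ 2) = |2 * lam| * √(1 + v ^ 2) := by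
      rw [← Real.sqrt_sq_eq_abs, ← Real.sqrt_mul (sq_nonneg _)]
      ring_nf
    have habs : |2 * lam| ≠ 0 := by positivity
    rw [hg_def, smul_smul, hsqrt, abs_mul, mul_div_mul_left _ _ habs, mul_div_assoc]
  calc |lam| • (unipotentOrbF ψ lam + unipotentOrbF ψ (-lam))
      = (|lam| * 2) • ∫ v, g (2 * lam * v) := by
        simp only [unipotentOrbF_add_neg hψ hsupp hlam, hscale, integral_smul, smul_smul]
    _ = ∫ u, g u := by
        rw [Measure.integral_comp_mul_left, smul_smul, abs_inv, abs_mul, abs_two, mul_comm |lam|,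
          mul_inv_cancel₀ (by positivity), one_smul]
    _ = abelTransform (fun u => ψ u + ψ (-u)) (2 * |lam|) := by
        rw [integral_eq_integral_Ioi_add_neg hg, abelTransform]
        refine setIntegral_congr_fun measurableSet_Ioi fun u hu => ?_
        simp only [hg_def, abs_neg, neg_sq, abs_of_pos (mem_Ioi.1 hu), mul_pow, sq_abs, smul_add]

end UnipotentIntegral

section Reduction

/-- The copy of `SO(2)` in `SO(3)` given by the rotations fixing the third basis vector;
multiplication by it on both sides brings `mSL t lam` to unipotent form. -/
def SO2 : Set SL3 :=
  {k ∈ SO3 | (k : Matrix (Fin 3) (Fin 3) ℝ) *ᵥ Pi.single 2 1 = Pi.single 2 1}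

/-- The element of `SO2` given by a unit complex number `w`, with upper left block
`w.re • 1 + w.im • J`, where `J` has rows `(0, 1)` and `(-1, 0)`. -/
noncomputable def circleToSL3 (w : Circle) : SL3 :=
  ⟨!![(w : ℂ).re, (w : ℂ).im, 0; -(w : ℂ).im, (w : ℂ).re, 0; 0, 0, 1], by
    have hw := Circle.normSq_coe w
    rw [Complex.normSq_apply] at hw
    simpa [det_fin_three] using hw⟩

lemma circleToSL3_mem_SO2 (w : Circle) : circleToSL3 w ∈ SO2 := by
  have hw := Circle.normSq_coe w
  rw [Complex.normSq_apply] at hw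
  refine ⟨?_, ?_⟩
  · ext i j
    fin_cases i <;> fin_cases j <;>
      simp [circleToSL3, mul_apply, Fin.sum_univ_three, hw, mul_comm, add_comm]
  · ext i
    fin_cases i <;> simp [circleToSL3]

lemma exists_circle_sq_mul_eq {z₁ z₂ : ℂ} (h : ‖z₁‖ = ‖z₂‖) :
    ∃ w : Circle, (w : ℂ) ^ 2 * z₁ = z₂ := by
  rcases eq_or_ne z₁ 0 with rfl | hz₁
  · exact ⟨1, by simpa [eq_comm] using h⟩
  obtain ⟨w, hw⟩ := IsAlgClosed.exists_pow_nat_eq (z₂ / z₁) two_pos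
  have hnorm : ‖w‖ = 1 := by
    rw [← pow_eq_one_iff_of_nonneg (norm_nonneg w) two_ne_zero, ← norm_pow, hw, norm_div, h,
      div_self (h ▸ norm_ne_zero_iff.2 hz₁)]
  exact ⟨⟨w, mem_sphere_zero_iff_norm.2 hnorm⟩, by simp only [hw, div_mul_cancel₀ _ hz₁]⟩

-- A real `2 × 2` matrix acts on `ℂ` by `x ↦ z x + ζ x̄`; multiplying on both sides by the rotation
-- `w` turns `z` into `w² z` and leaves `ζ` unchanged.
lemma circleToSL3_mul_mul_circleToSL3 {w : Circle} {c s d : ℝ}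
    (hw : (w : ℂ) ^ 2 * ⟨c, s⟩ = ⟨1, d⟩) :
    (circleToSL3 w : Matrix (Fin 3) (Fin 3) ℝ) * !![c, s + d, 0; d - s, c, 0; 0, 0, 1] *
      (circleToSL3 w : Matrix (Fin 3) (Fin 3) ℝ) = transvection 0 1 (2 * d) := by
  have hunit := Circle.normSq_coe w
  rw [Complex.normSq_apply] at hunit
  obtain ⟨hre, him⟩ := Complex.ext_iff.1 hw
  simp only [sq, Complex.mul_re, Complex.mul_im] at hre him
  ext i j
  fin_cases i <;> fin_cases j <;>
    simp [circleToSL3, transvection, mul_apply, Fin.sum_univ_three]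
  · linear_combination hre
  · linear_combination him + d * hunit
  · linear_combination d * hunit - him
  · linear_combination hre

lemma coe_mSL {t lam : ℝ} (ht : 0 < t) (hlam : |lam| < 1) :
    (mSL t lam : Matrix (Fin 3) (Fin 3) ℝ) =
      !![√(1 - lam ^ 2), t * lam, 0; -(t⁻¹ * lam), √(1 - lam ^ 2), 0; 0, 0, 1] :=
  congrArg Subtype.val (dif_pos ⟨ht, hlam⟩)

lemma exists_mem_SO2_coe_mul_mSL_mul {t lam : ℝ} (ht : 0 < t) (hlam : |lam| < 1) :
    ∃ k ∈ SO2, ((k * mSL t lam * k : SL3) : Matrix (Fin 3) (Fin 3) ℝ) =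
      transvection 0 1 (lam * (t - t⁻¹)) := by
  set s := lam * (t + t⁻¹) / 2 with hs
  set d := lam * (t - t⁻¹) / 2 with hd
  have hsqrt : √(1 - lam ^ 2) ^ 2 = 1 - lam ^ 2 :=
    Real.sq_sqrt (sub_nonneg.2 ((sq_lt_one_iff_abs_lt_one lam).2 hlam).le)
  have hnorm : ‖(⟨√(1 - lam ^ 2), s⟩ : ℂ)‖ = ‖(⟨1, d⟩ : ℂ)‖ := by
    rw [Complex.norm_def, Complex.norm_def, Complex.normSq_mk, Complex.normSq_mk]
    congr 1
    linear_combination hsqrt + lam ^ 2 * mul_inv_cancel₀ ht.ne'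
  obtain ⟨w, hw⟩ := exists_circle_sq_mul_eq hnorm
  refine ⟨circleToSL3 w, circleToSL3_mem_SO2 w, ?_⟩
  have hupper : t * lam = s + d := by rw [hs, hd]; ring
  have hlower : -(t⁻¹ * lam) = d - s := by rw [hs, hd]; ring
  have hdouble : lam * (t - t⁻¹) = 2 * d := by rw [hd]; ring
  rw [Matrix.SpecialLinearGroup.coe_mul, Matrix.SpecialLinearGroup.coe_mul, coe_mSL ht hlam,
    hupper, hlower, hdouble]
  exact circleToSL3_mul_mul_circleToSL3 hw

lemma contDiff_transvection (i j : Fin 3) {n : WithTop ℕ∞} :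
    ContDiff ℝ n fun u : ℝ => transvection i j u := by
  have hline (u : ℝ) : transvection i j u = 1 + u • single i j (1 : ℝ) := by
    rw [transvection, smul_single, smul_eq_mul, mul_one]
  simp only [hline]
  fun_prop

lemma isClosedEmbedding_transvection {i j : Fin 3} (hij : i ≠ j) :
    IsClosedEmbedding fun u : ℝ => transvection i j u := by
  have hinv : Function.LeftInverse (fun M : Matrix (Fin 3) (Fin 3) ℝ => M i j)
      fun u => transvection i j u := fun u => by
    simp [transvection, hij]
  exact hinv.isClosedEmbedding (continuous_apply_apply i j)
    (contDiff_transvection i j (n := 0)).continuous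

lemma orbF_eq_unipotentOrbF {f : SL3 → ℂ} {fext : Matrix (Fin 3) (Fin 3) ℝ → ℂ}
    (hrestr : ∀ g : SL3, f g = fext ↑g)
    (hbi : ∀ k₁ ∈ SO2, ∀ k₂ ∈ SO2, ∀ g : SL3, f (k₁ * g * k₂) = f g) {lam : ℝ} (hlam : |lam| < 1) :
    orbF f lam = unipotentOrbF (fun u => fext (transvection 0 1 u)) lam := by
  refine setIntegral_congr_fun measurableSet_Ioi fun t ht => ?_
  obtain ⟨k, hk, hkm⟩ := exists_mem_SO2_coe_mul_mSL_mul ht hlam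
  simp only [← hbi k hk k hk (mSL t lam), hrestr, hkm, Complex.real_smul]

end Reduction

section Expansion

lemma exists_sum_range_eq_sum_inv_mul_pow {K : Type*} [Field K] (c : ℕ → K) (N : ℕ) :
    ∃ a b : ℕ → K, ∀ x, x ≠ 0 → ∑ k ∈ Finset.range (2 * N + 1), x ^ k * c k =
      ∑ n ∈ Finset.range (N + 1), (a n * x⁻¹ + b n) * x ^ (2 * n) := by
  refine ⟨fun | 0 => 0 | n + 1 => c (2 * n + 1), fun n => c (2 * n), fun x hx => ?_⟩
  simp only [add_mul, Finset.sum_add_distrib]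
  rw [sum_range_two_mul_add_one, add_comm]
  congr 1
  · simp only [Finset.sum_range_succ', zero_mul, add_zero]
    refine Finset.sum_congr rfl fun n _ => ?_
    field_simp
    ring
  · simp only [mul_comm]

lemma exists_isLittleO_sub_sum_abs_inv {g : ℝ → ℂ} {c : ℕ → ℂ} {N : ℕ}
    (hg : (fun y => g y - ∑ k ∈ Finset.range (2 * N + 1), y ^ k • c k)
      =o[𝓝[>] 0] fun y => y ^ (2 * N)) {r : ℝ} (hr : 0 < r) :
    ∃ a b : ℕ → ℂ, (fun lam : ℝ => g (r * |lam|) - ∑ n ∈ Finset.range (N + 1),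
        (a n * ((|lam|⁻¹ : ℝ) : ℂ) + b n) * (lam : ℂ) ^ (2 * n))
      =o[𝓝[≠] 0] fun lam : ℝ => lam ^ (2 * N) := by
  obtain ⟨a, b, hab⟩ := exists_sum_range_eq_sum_inv_mul_pow (fun k => (r : ℂ) ^ k * c k) N
  refine ⟨a, b, ?_⟩
  have htendsto : Tendsto (fun lam : ℝ => r * |lam|) (𝓝[≠] 0) (𝓝[>] 0) := by
    refine tendsto_nhdsWithin_iff.2 ⟨?_, ?_⟩
    · exact ((continuous_const.mul continuous_abs).tendsto' 0 0 (by simp)).mono_left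
        nhdsWithin_le_nhds
    · filter_upwards [self_mem_nhdsWithin] with lam hlam
      exact mul_pos hr (abs_pos.2 hlam)
  have hpow : (fun lam : ℝ => (r * |lam|) ^ (2 * N)) =O[𝓝[≠] 0] fun lam => lam ^ (2 * N) := by
    simp only [mul_pow, (even_two_mul N).pow_abs]
    exact isBigO_const_mul_self _ _ _
  refine ((hg.comp_tendsto htendsto).trans_isBigO hpow).congr' ?_ .rfl
  filter_upwards [self_mem_nhdsWithin] with lam hlam
  have habs : ((|lam| : ℝ) : ℂ) ≠ 0 := Complex.ofReal_ne_zero.2 (abs_ne_zero.2 hlam)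
  have hpow_abs (n : ℕ) : ((|lam| : ℝ) : ℂ) ^ (2 * n) = (lam : ℂ) ^ (2 * n) := by
    rw [← Complex.ofReal_pow, (even_two_mul n).pow_abs, Complex.ofReal_pow]
  have hsum := hab _ habs
  simp only [hpow_abs] at hsum
  simp only [Function.comp_apply, Complex.ofReal_inv, ← hsum, Complex.real_smul,
    Complex.ofReal_pow, Complex.ofReal_mul, mul_pow, mul_assoc, mul_left_comm]

end Expansion

theorem even_combination_asymptotic_expansion_general
    (f : SL3 → ℂ) (fext : Matrix (Fin 3) (Fin 3) ℝ → ℂ)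
    (hsmooth : ContDiff ℝ (⊤ : ℕ∞) fext) (hsupp : HasCompactSupport fext)
    (hrestr : ∀ g : SL3, f g = fext ↑g)
    (hbi : ∀ k₁ ∈ SO2, ∀ k₂ ∈ SO2, ∀ g : SL3, f (k₁ * g * k₂) = f g) :
    ∀ N : ℕ, ∃ a b : ℕ → ℂ,
      (fun lam : ℝ =>
          ((|lam| : ℝ) : ℂ) * (orbF f lam + orbF f (-lam))
            - ∑ n ∈ Finset.range (N + 1),
                (a n * ((|lam|⁻¹ : ℝ) : ℂ) + b n) * (lam : ℂ) ^ (2 * n))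
        =o[nhdsWithin 0 {(0:ℝ)}ᶜ] fun lam : ℝ => lam ^ (2 * N) := by
  intro N
  set ψ : ℝ → ℂ := fun u => fext (transvection 0 1 u)
  have hψ : ContDiff ℝ ∞ ψ := hsmooth.comp (contDiff_transvection 0 1)
  have hψsupp : HasCompactSupport ψ :=
    hsupp.comp_isClosedEmbedding (isClosedEmbedding_transvection zero_ne_one)
  have heven : (fun u => ψ u + ψ (-u)).Even := fun u => by simp only [neg_neg, add_comm]
  obtain ⟨c, hc⟩ := exists_abelTransform_sub_sum_isLittleO heven (hψ.add (hψ.comp contDiff_neg))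
    (hψsupp.add (hψsupp.comp_homeomorph (Homeomorph.neg ℝ))) N
  obtain ⟨a, b, hab⟩ := exists_isLittleO_sub_sum_abs_inv hc two_pos
  refine ⟨a, b, hab.congr' ?_ .rfl⟩
  have hlt : ∀ᶠ lam : ℝ in 𝓝[≠] 0, |lam| < 1 :=
    nhdsWithin_le_nhds (continuous_abs.tendsto' (0 : ℝ) 0 abs_zero |>.eventually_lt_const one_pos)
  filter_upwards [hlt, self_mem_nhdsWithin] with lam hlam hlam₀
  rw [orbF_eq_unipotentOrbF hrestr hbi hlam, orbF_eq_unipotentOrbF hrestr hbi (by rwa [abs_neg]),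
    ← Complex.real_smul, abs_smul_unipotentOrbF_add_neg hψ.continuous hψsupp hlam₀]

/-- For `f` smooth with compact support (i.e. the restriction to `SL(3,ℝ)` of a smooth
compactly supported function on the matrix space) and `K`-bi-invariant, the function
`G_f(λ) = |λ|·(F_f(λ) + F_f(-λ))` admits, for every `N`, an asymptotic expansion
`G_f(λ) = ∑_{n=0}^N (aₙ|λ|⁻¹ + bₙ) λ^{2n} + o(λ^{2N})` as `λ → 0`. -/
theorem even_combination_asymptotic_expansion
    (f : SL3 → ℂ) (fext : Matrix (Fin 3) (Fin 3) ℝ → ℂ)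
    (hsmooth : ContDiff ℝ (⊤ : ℕ∞) fext) (hsupp : HasCompactSupport fext)
    (hrestr : ∀ g : SL3, f g = fext ↑g)
    (hbi : ∀ k₁ ∈ SO3, ∀ k₂ ∈ SO3, ∀ g : SL3, f (k₁ * g * k₂) = f g) :
    ∀ N : ℕ, ∃ a b : ℕ → ℂ,
      (fun lam : ℝ =>
          ((|lam| : ℝ) : ℂ) * (orbF f lam + orbF f (-lam))
            - ∑ n ∈ Finset.range (N + 1),
                (a n * ((|lam|⁻¹ : ℝ) : ℂ) + b n) * (lam : ℂ) ^ (2 * n))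
        =o[nhdsWithin 0 {(0:ℝ)}ᶜ] fun lam : ℝ => lam ^ (2 * N) := by
  exact even_combination_asymptotic_expansion_general f fext hsmooth hsupp hrestr
    fun k₁ h₁ k₂ h₂ => hbi k₁ h₁.1 k₂ h₂.1
end
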